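/- The q-links are stochastic matrices: for every N ≥ 1, all entries Λ^{N+1}_N(X,Y) are nonnegative, and for every X ∈ 𝔾_{N+1} the series Σ_{Y ∈ 𝔾_N} Λ^{N+1}_N(X,Y) converges and equals 1. -/

import Mathlib

open scoped BigOperators
open Classical

noncomputable section

/-- The double q-lattice Λ = {ζ₋ qᵐ} ∪ {ζ₊ qⁿ}. -/
def Lambda (q zm zp : ℝ) : Set ℝ :=
  {x | ∃ m : ℤ, x = zm * q ^ m} ∪ {x | ∃ n : ℤ, x = zp * q ^ n}

/-- The interval I(a,b) of the double q-lattice. -/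
def qInterval (q zm zp a b : ℝ) : Set ℝ :=
  if b < 0 then Set.Ico a b ∩ Lambda q zm zp
  else if a < 0 then Set.Icc a b ∩ Lambda q zm zp
  else Set.Ioc a b ∩ Lambda q zm zp

/-- N-point configurations on the lattice. -/
def Conf (q zm zp : ℝ) (N : ℕ) : Type :=
  {x : Fin N → ℝ // StrictMono x ∧ ∀ i, x i ∈ Lambda q zm zp}

/-- Interlacement Y ≺ X. -/
def Interlaces (q zm zp : ℝ) {N : ℕ} (Y : Conf q zm zp N) (X : Conf q zm zp (N+1)) : Prop :=
  ∀ i : Fin N, Y.1 i ∈ qInterval q zm zp (X.1 i.castSucc) (X.1 i.succ)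

/-- Vandermonde-type product ∏_{i<j} (x_j - x_i). -/
def vprod {N : ℕ} (x : Fin N → ℝ) : ℝ :=
  ∏ p ∈ Finset.univ.filter (fun p : Fin N × Fin N => p.1 < p.2), (x p.2 - x p.1)

/-- finite q-Pochhammer symbol (a;q)_n, real version. -/
def qpochR (a q : ℝ) (n : ℕ) : ℝ := ∏ m ∈ Finset.range n, (1 - a * q ^ m)

/-- The q-link Λ^{N+1}_N: equal to ∏|yᵢ| (1−q)⋯(1−q^N) ∏_{i<j}(y_j−y_i)/∏_{i<j}(x_j−x_i)
when Y ≺ X and to 0 otherwise. -/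
def qlink (q zm zp : ℝ) (N : ℕ) (X : Conf q zm zp (N+1)) (Y : Conf q zm zp N) : ℝ :=
  if Interlaces q zm zp Y X then
    (∏ i, |Y.1 i|) * qpochR q q N * vprod Y.1 / vprod X.1
  else 0

theorem vprod_eq_det {N : ℕ} (x : Fin N → ℝ) : vprod x = (Matrix.vandermonde x).det := by
  rw [Matrix.det_vandermonde, vprod, Finset.prod_filter, ← Finset.univ_product_univ,
    Finset.prod_product]
  refine Finset.prod_congr rfl fun i _ => ?_
  rw [← Finset.prod_filter]
  refine Finset.prod_congr ?_ fun _ _ => rfl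
  ext j
  simp

theorem vprod_pos {N : ℕ} {x : Fin N → ℝ} (hx : StrictMono x) : 0 < vprod x := by
  refine Finset.prod_pos fun p hp => ?_
  have := hx (Finset.mem_filter.1 hp).2
  linarith

theorem qpochR_pos {q : ℝ} (hq0 : 0 < q) (hq1 : q < 1) (n : ℕ) : 0 < qpochR q q n := by
  refine Finset.prod_pos fun m _ => ?_
  have : q * q ^ m < 1 := by
    rw [← pow_succ']
    exact pow_lt_one₀ hq0.le hq1 (by simp)
  linarith

theorem det_diff {N : ℕ} (x : Fin (N+1) → ℝ) :
    (Matrix.of fun i j : Fin N => x i.succ ^ (j.val+1) - x i.castSucc ^ (j.val+1)).det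
      = (Matrix.vandermonde x).det := by
  let B : Matrix (Fin (N+1)) (Fin (N+1)) ℝ := Matrix.of fun i j =>
    Fin.cases (x 0 ^ j.val) (fun i => x i.succ ^ j.val - x i.castSucc ^ j.val) i
  have h : (Matrix.vandermonde x).det = B.det := by
    refine Matrix.det_eq_of_forall_row_eq_smul_add_pred (fun _ => 1) ?_ ?_
    · intro j; simp [B, Matrix.vandermonde_apply]
    · intro i j; simp [B, Matrix.vandermonde_apply]
  rw [h, Matrix.det_succ_column_zero, Fin.sum_univ_succ]
  have h0 : ∀ i : Fin N, B i.succ 0 = 0 := by intro i; simp [B]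
  simp only [h0]
  have h1 : B 0 0 = 1 := by simp [B]
  simp only [h1]
  simp
  congr 1

theorem hs_congr {β : Type*} {f g : β → ℝ} {a b : ℝ} (h : HasSum f a) (hf : g = f) (hb : b = a) :
    HasSum g b := by
  rw [hf, hb]
  exact h

theorem summable_mul_real {α β : Type*} {f : α → ℝ} {g : β → ℝ} (hf : Summable f)
    (hg : Summable g) : Summable fun p : α × β => f p.1 * g p.2 := by
  have hf1 : Summable fun x => |f x| := hf.abs
  have hg1 : Summable fun x => |g x| := hg.abs
  have h := Summable.mul_of_nonneg hf1 hg1 (fun _ => abs_nonneg _) (fun _ => abs_nonneg _)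
  refine Summable.of_abs ?_
  simp only [abs_mul]
  exact h

theorem hasSum_pi_prod {ι : Type*} {N : ℕ} (f : Fin N → ι → ℝ) (c : Fin N → ℝ)
    (h : ∀ i, HasSum (f i) (c i)) :
    HasSum (fun y : Fin N → ι => ∏ i, f i (y i)) (∏ i, c i) := by
  induction N with
  | zero =>
    simp only [Finset.univ_eq_empty, Finset.prod_empty]
    exact hasSum_unique _
  | succ N ih0 =>
    have ih := ih0 (fun i : Fin N => f i.succ) (fun i => c i.succ) (fun i => h i.succ)
    have h0 := h 0
    generalize hF : (fun y : Fin N → ι => ∏ i, f i.succ (y i)) = F at ih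
    generalize hC : ∏ i : Fin N, c i.succ = C at ih
    have h2 := h0.mul ih (summable_mul_real h0.summable ih.summable)
    rw [← (Fin.consEquiv (fun _ : Fin (N+1) => ι)).hasSum_iff, Fin.prod_univ_succ, hC]
    refine hs_congr h2 ?_ rfl
    funext p
    subst hF
    simp [Fin.consEquiv, Fin.prod_univ_succ]

/-- The forward q-orbit of a point. -/
def orb (q t : ℝ) : Set ℝ := Set.range fun m : ℕ => t * q ^ m

theorem hasSum_orb {q : ℝ} (hq0 : 0 < q) (hq1 : q < 1) {t : ℝ} (ht : t ≠ 0) (k : ℕ) :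
    HasSum ((orb q t).indicator fun y => |y| * y ^ k) (|t| * t ^ k / (1 - q ^ (k+1))) := by
  have hinj : Function.Injective fun m : ℕ => t * q ^ m := by
    intro a b hab
    exact pow_right_injective₀ hq0 hq1.ne (mul_left_cancel₀ ht hab)
  rw [← hasSum_subtype_iff_indicator]
  refine (hinj.hasSum_range_iff (f := fun y => |y| * y ^ k)).2 ?_
  have hg := (hasSum_geometric_of_lt_one (pow_nonneg hq0.le (k+1))
    (pow_lt_one₀ hq0.le hq1 (Nat.succ_ne_zero k))).mul_left (|t| * t ^ k)
  rw [← div_eq_mul_inv] at hg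
  refine hs_congr hg ?_ rfl
  funext m
  simp only [Function.comp, abs_mul, abs_of_pos (pow_pos hq0 m)]
  ring

theorem mem_orb_iff {q : ℝ} (hq0 : 0 < q) (hq1 : q < 1) {z : ℝ} (hz : z ≠ 0) (m n : ℤ) :
    z * q ^ m ∈ orb q (z * q ^ n) ↔ |z * q ^ m| ≤ |z * q ^ n| := by
  rw [abs_mul, abs_mul, abs_of_pos (zpow_pos hq0 m), abs_of_pos (zpow_pos hq0 n),
    mul_le_mul_iff_right₀ (abs_pos.2 hz), zpow_le_zpow_iff_right_of_lt_one₀ hq0 hq1]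
  constructor
  · rintro ⟨j, hj⟩
    simp only [mul_assoc] at hj
    have := mul_left_cancel₀ hz hj
    rw [← zpow_natCast, ← zpow_add₀ hq0.ne'] at this
    have := zpow_right_injective₀ hq0 hq1.ne this
    omega
  · intro h
    refine ⟨(m - n).toNat, ?_⟩
    simp only [mul_assoc]
    rw [← zpow_natCast, ← zpow_add₀ hq0.ne']
    congr 2
    omega

theorem orb_pos {q zm zp : ℝ} (hq0 : 0 < q) (hq1 : q < 1) (hzm : zm < 0) (hzp : 0 < zp)
    {t : ℝ} (ht : t ∈ Lambda q zm zp) (h0 : 0 < t) (y : ℝ) :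
    y ∈ orb q t ↔ y ∈ Lambda q zm zp ∧ 0 < y ∧ y ≤ t := by
  obtain ⟨n, rfl⟩ | ⟨n, rfl⟩ := ht
  · exact absurd h0 (mul_neg_of_neg_of_pos hzm (zpow_pos hq0 n)).not_gt
  constructor
  · rintro ⟨j, rfl⟩
    refine ⟨Or.inr ⟨n + j, ?_⟩, by positivity, ?_⟩
    · simp [zpow_add₀ hq0.ne', mul_assoc]
    · exact mul_le_of_le_one_right h0.le (pow_le_one₀ hq0.le hq1.le)
  · rintro ⟨⟨m, rfl⟩ | ⟨m, rfl⟩, h1, h2⟩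
    · exact absurd h1 (mul_neg_of_neg_of_pos hzm (zpow_pos hq0 m)).not_gt
    · rw [mem_orb_iff hq0 hq1 hzp.ne', abs_of_pos h0, abs_of_pos h1]
      exact h2

theorem orb_neg {q zm zp : ℝ} (hq0 : 0 < q) (hq1 : q < 1) (hzm : zm < 0) (hzp : 0 < zp)
    {t : ℝ} (ht : t ∈ Lambda q zm zp) (h0 : t < 0) (y : ℝ) :
    y ∈ orb q t ↔ y ∈ Lambda q zm zp ∧ y < 0 ∧ t ≤ y := by
  obtain ⟨n, rfl⟩ | ⟨n, rfl⟩ := ht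
  swap
  · exact absurd h0 (mul_pos hzp (zpow_pos hq0 n)).not_gt
  constructor
  · rintro ⟨j, rfl⟩
    refine ⟨Or.inl ⟨n + j, ?_⟩, mul_neg_of_neg_of_pos h0 (by positivity), ?_⟩
    · simp [zpow_add₀ hq0.ne', mul_assoc]
    · exact le_mul_of_le_one_right h0.le (pow_le_one₀ hq0.le hq1.le)
  · rintro ⟨⟨m, rfl⟩ | ⟨m, rfl⟩, h1, h2⟩
    · rw [mem_orb_iff hq0 hq1 hzm.ne, abs_of_neg h0, abs_of_neg h1]
      exact neg_le_neg h2
    · exact absurd h1 (mul_pos hzp (zpow_pos hq0 m)).not_gt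

theorem Lambda_ne {q zm zp : ℝ} (hq0 : 0 < q) (hzm : zm < 0) (hzp : 0 < zp)
    {t : ℝ} (ht : t ∈ Lambda q zm zp) : t ≠ 0 := by
  obtain ⟨n, rfl⟩ | ⟨n, rfl⟩ := ht
  · exact (mul_neg_of_neg_of_pos hzm (zpow_pos hq0 n)).ne
  · exact (mul_pos hzp (zpow_pos hq0 n)).ne'

theorem hasSum_qInterval {q zm zp : ℝ} (hq0 : 0 < q) (hq1 : q < 1) (hzm : zm < 0) (hzp : 0 < zp)
    {a b : ℝ} (ha : a ∈ Lambda q zm zp) (hb : b ∈ Lambda q zm zp) (hab : a < b) (k : ℕ) :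
    HasSum ((qInterval q zm zp a b).indicator fun y => |y| * y ^ k)
      ((b ^ (k+1) - a ^ (k+1)) / (1 - q ^ (k+1))) := by
  have ha0 := Lambda_ne hq0 hzm hzp ha
  have hb0 := Lambda_ne hq0 hzm hzp hb
  have Ha := hasSum_orb hq0 hq1 ha0 k
  have Hb := hasSum_orb hq0 hq1 hb0 k
  by_cases hbn : b < 0
  · have han : a < 0 := hab.trans hbn
    refine hs_congr (Ha.sub Hb) ?_ ?_
    · funext y
      simp only [Set.indicator_apply, orb_neg hq0 hq1 hzm hzp ha han,
        orb_neg hq0 hq1 hzm hzp hb hbn, qInterval, if_pos hbn, Set.mem_inter_iff, Set.mem_Ico]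
      by_cases hy : y ∈ Lambda q zm zp
      · by_cases h1 : a ≤ y <;> by_cases h2 : y < b <;> by_cases h3 : y < 0 <;>
          by_cases h4 : b ≤ y <;> simp [hy, h1, h2, h3, h4] <;> exfalso <;> linarith
      · simp [hy]
    · rw [abs_of_neg han, abs_of_neg hbn]; ring
  · have hbp : 0 < b := lt_of_le_of_ne (not_lt.1 hbn) hb0.symm
    by_cases han : a < 0
    · refine hs_congr (Ha.add Hb) ?_ ?_
      · funext y
        simp only [Set.indicator_apply, orb_neg hq0 hq1 hzm hzp ha han,
          orb_pos hq0 hq1 hzm hzp hb hbp, qInterval, if_neg hbn, if_pos han,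
          Set.mem_inter_iff, Set.mem_Icc]
        by_cases hy : y ∈ Lambda q zm zp
        · have hy0 := Lambda_ne hq0 hzm hzp hy
          rcases lt_or_gt_of_ne hy0 with h | h
          · have h5 : y ≤ b := by linarith
            simp [hy, h, h.not_gt, h5]
          · have h5 : a ≤ y := by linarith
            simp [hy, h, h.not_gt, h5]
        · simp [hy]
      · rw [abs_of_neg han, abs_of_pos hbp]; ring
    · have hap : 0 < a := lt_of_le_of_ne (not_lt.1 han) ha0.symm
      refine hs_congr (Hb.sub Ha) ?_ ?_
      · funext y
        simp only [Set.indicator_apply, orb_pos hq0 hq1 hzm hzp ha hap,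
          orb_pos hq0 hq1 hzm hzp hb hbp, qInterval, if_neg hbn, if_neg han,
          Set.mem_inter_iff, Set.mem_Ioc]
        by_cases hy : y ∈ Lambda q zm zp
        · by_cases h1 : a < y <;> by_cases h2 : y ≤ b <;> by_cases h3 : 0 < y <;>
            by_cases h4 : y ≤ a <;> simp [hy, h1, h2, h3, h4] <;> exfalso <;> linarith
        · simp [hy]
      · rw [abs_of_pos hap, abs_of_pos hbp]; ring

theorem mem_qInterval_Lambda {q zm zp a b y : ℝ} (h : y ∈ qInterval q zm zp a b) :
    y ∈ Lambda q zm zp := by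
  unfold qInterval at h
  split_ifs at h <;> exact h.2

theorem qInterval_lt {q zm zp a b c y z : ℝ} (hab : a < b) (hbc : b < c)
    (h1 : y ∈ qInterval q zm zp a b) (h2 : z ∈ qInterval q zm zp b c) : y < z := by
  unfold qInterval at h1 h2
  split_ifs at h1 h2 <;>
    simp only [Set.mem_inter_iff, Set.mem_Ico, Set.mem_Icc, Set.mem_Ioc] at h1 h2 <;> linarith

theorem interlace_strictMono {q zm zp : ℝ} {N : ℕ} {x : Fin (N+1) → ℝ} (hx : StrictMono x)
    {y : Fin N → ℝ} (h : ∀ i, y i ∈ qInterval q zm zp (x i.castSucc) (x i.succ)) :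
    StrictMono y := by
  cases N with
  | zero => intro i; exact i.elim0
  | succ n =>
    rw [Fin.strictMono_iff_lt_succ]
    intro i
    have h1 := h i.castSucc
    have h2 := h i.succ
    rw [Fin.succ_castSucc] at h1
    exact qInterval_lt (hx (by simp [Fin.lt_def])) (hx (by simp [Fin.lt_def])) h1 h2

/-- The q-links are stochastic matrices: all entries are nonnegative and every row
sums to 1 (the series converging to 1). -/
theorem qlink_stochastic (q zm zp : ℝ) (hq0 : 0 < q) (hq1 : q < 1) (hzm : zm < 0)
    (hzp : 0 < zp) (N : ℕ) (hN : 1 ≤ N) :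
    (∀ (X : Conf q zm zp (N+1)) (Y : Conf q zm zp N), 0 ≤ qlink q zm zp N X Y) ∧
    (∀ X : Conf q zm zp (N+1), HasSum (fun Y : Conf q zm zp N => qlink q zm zp N X Y) 1) := by
  constructor
  · intro X Y
    unfold qlink
    split_ifs
    · have := vprod_pos X.2.1
      have := vprod_pos Y.2.1
      have := qpochR_pos hq0 hq1 N
      have : 0 ≤ ∏ i, |Y.1 i| := Finset.prod_nonneg fun _ _ => abs_nonneg _
      positivity
    · exact le_rfl
  · intro X
    let I : Fin N → Set ℝ := fun i => qInterval q zm zp (X.1 i.castSucc) (X.1 i.succ)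
    let M : (Fin N → ℝ) → Matrix (Fin N) (Fin N) ℝ := fun y => Matrix.of fun i j =>
      (I i).indicator (fun t => |t| * t ^ j.val) (y i)
    let C : Matrix (Fin N) (Fin N) ℝ := Matrix.of fun i j =>
      (X.1 i.succ ^ (j.val+1) - X.1 i.castSucc ^ (j.val+1)) / (1 - q ^ (j.val+1))
    have hM : HasSum (fun y => (M y).det) C.det := by
      simp only [← Matrix.det_transpose C, ← Matrix.det_transpose (M _), Matrix.det_apply]
      refine hasSum_sum fun σ _ => ?_
      refine HasSum.const_smul _ ?_
      refine hasSum_pi_prod (fun i t => (I i).indicator (fun t => |t| * t ^ (σ i).val) t) _ ?_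
      intro i
      exact hasSum_qInterval hq0 hq1 hzm hzp (X.2.2 _) (X.2.2 _)
        (X.2.1 Fin.castSucc_lt_succ) _
    have hMv : ∀ y : Fin N → ℝ, (M y).det =
        if ∀ i, y i ∈ I i then (∏ i, |y i|) * vprod y else 0 := by
      intro y
      split_ifs with h
      · rw [vprod_eq_det, ← Matrix.det_mul_column]
        congr 1
        ext i j
        simp [M, h i, Matrix.vandermonde_apply]
      · push Not at h
        obtain ⟨i, hi⟩ := h
        refine Matrix.det_eq_zero_of_row_eq_zero i fun j => ?_
        simp [M, hi]
    have hC : qpochR q q N * C.det = vprod X.1 := by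
      rw [vprod_eq_det, ← det_diff, qpochR, ← Fin.prod_univ_eq_prod_range (fun m => 1 - q * q ^ m),
        ← Matrix.det_mul_row]
      congr 1
      ext i j
      have : (1 - q ^ (j.val+1)) ≠ 0 := by
        have := pow_lt_one₀ hq0.le hq1 (Nat.succ_ne_zero j.val)
        exact (sub_pos.2 this).ne'
      simp only [C, Matrix.of_apply, ← pow_succ']
      field_simp
    have hX := (vprod_pos X.2.1).ne'
    have hS := hM.mul_left (qpochR q q N / vprod X.1)
    rw [div_mul_eq_mul_div, hC, div_self hX] at hS
    have hsub : Function.support (fun y => qpochR q q N / vprod X.1 * (M y).det) ⊆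
        {x : Fin N → ℝ | StrictMono x ∧ ∀ i, x i ∈ Lambda q zm zp} := by
      intro y hy
      have h : ∀ i, y i ∈ I i := by
        by_contra hn
        apply hy
        simp only [hMv, if_neg hn, mul_zero]
      exact ⟨interlace_strictMono X.2.1 h, fun i => mem_qInterval_Lambda (h i)⟩
    have hT := (hasSum_subtype_iff_of_support_subset hsub).2 hS
    refine Eq.mp ?_ hT
    congr 1
    funext Y
    simp only [Function.comp, hMv]
    unfold qlink Interlaces
    by_cases h : ∀ i, Y.1 i ∈ I i
    · rw [if_pos h, if_pos h]
      ring
    · rw [if_neg h, if_neg h, mul_zero]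

end
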